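/- Suppose m = t(d+1) with t ≥ 1 (i.e., α = 0). Then the critical cells of the matching μ on the face poset of Ind(G_m^d) are exactly the d sets {b_1, b_{j_1}, b_{i_2}, b_{j_2}, …, b_{i_t}, b_{j_t}} for j_1 ∈ {2,…,d+1}, where i_r = 1 + (r−1)(d+1) and j_r = j_1 + (r−1)(d+1); in particular there are exactly d critical cells, each of cardinality 2t. -/

import Mathlib

open Finset

/-- The graph `G_m^d` on vertex set `Fin m ⊕ Fin m` (0-based indexing):
`Sum.inl i` is the vertex `a_{i+1}` and `Sum.inr j` is the vertex `b_{j+1}` of the paper;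
`a_i` is adjacent to `b_j` iff `(j - i) mod m ∈ {0, …, d-1}`. -/
def Gmd (m d : ℕ) : SimpleGraph (Fin m ⊕ Fin m) :=
  SimpleGraph.fromRel (fun u v =>
    ∃ i j : Fin m, u = Sum.inl i ∧ v = Sum.inr j ∧ (j.val + m - i.val) % m < d)

/-- A finite set of vertices is independent iff no two of its elements are adjacent. -/
def IsInd (m d : ℕ) (σ : Finset (Fin m ⊕ Fin m)) : Prop :=
  ∀ u ∈ σ, ∀ v ∈ σ, ¬ (Gmd m d).Adj u v

/-- The face poset `P` of the independence complex `Ind (G_m^d)` (ordered by `⊆`),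
including the empty simplex. -/
def faceP (m d : ℕ) : Set (Finset (Fin m ⊕ Fin m)) := {σ | IsInd m d σ}

/-- One step of the matching construction: `S_x(T) = {σ ∈ T | x ∉ σ, σ ∪ {x} ∈ T}`. -/
def stepS {α : Type*} [DecidableEq α] (x : α) (T : Set (Finset α)) : Set (Finset α) :=
  {σ | σ ∈ T ∧ x ∉ σ ∧ insert x σ ∈ T}

/-- The survivors of one step: `T \ (S_x(T) ∪ μ_x(S_x(T)))`. -/
def stepSurv {α : Type*} [DecidableEq α] (x : α) (T : Set (Finset α)) : Set (Finset α) :=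
  T \ (stepS x T ∪ (insert x) '' (stepS x T))

/-- Iterating the matching construction along a list of vertices. -/
def phase {α : Type*} [DecidableEq α] (T : Set (Finset α)) (l : List α) : Set (Finset α) :=
  l.foldl (fun T x => stepSurv x T) T

/-- The list `a_1, …, a_m`. -/
def listA (m : ℕ) : List (Fin m ⊕ Fin m) := (List.finRange m).map Sum.inl
/-- The list `b_1, …, b_m`. -/
def listB (m : ℕ) : List (Fin m ⊕ Fin m) := (List.finRange m).map Sum.inr

/-- `S_{a_{i+1}}` (0-based `i`): the set matched with `a_{i+1}` at stage `i+1` of phase one. -/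
def Sa (m d : ℕ) (i : Fin m) : Set (Finset (Fin m ⊕ Fin m)) :=
  stepS (Sum.inl i) (phase (faceP m d) ((listA m).take i.val))

/-- `M = P \ (S_1 ∪ μ_1(S_1))`, the simplices surviving phase one. -/
def setM (m d : ℕ) : Set (Finset (Fin m ⊕ Fin m)) := phase (faceP m d) (listA m)

/-- `S_{b_{i+1}}` (0-based `i`): the set matched with `b_{i+1}` at stage `i+1` of phase two. -/
def Sb (m d : ℕ) (i : Fin m) : Set (Finset (Fin m ⊕ Fin m)) :=
  stepS (Sum.inr i) (phase (setM m d) ((listB m).take i.val))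

/-- `𝒮_{a_{i+1}} = S_{a_{i+1}} ∪ μ_{a_{i+1}}(S_{a_{i+1}})`. -/
def scriptSa (m d : ℕ) (i : Fin m) : Set (Finset (Fin m ⊕ Fin m)) :=
  Sa m d i ∪ (insert (Sum.inl i)) '' (Sa m d i)

/-- `𝒮_{b_{i+1}} = S_{b_{i+1}} ∪ μ_{b_{i+1}}(S_{b_{i+1}})`. -/
def scriptSb (m d : ℕ) (i : Fin m) : Set (Finset (Fin m ⊕ Fin m)) :=
  Sb m d i ∪ (insert (Sum.inr i)) '' (Sb m d i)

/-- The critical cells `C = P \ (S ∪ μ(S))`. -/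
def setC (m d : ℕ) : Set (Finset (Fin m ⊕ Fin m)) :=
  faceP m d \ ((⋃ i : Fin m, scriptSa m d i) ∪ (⋃ i : Fin m, scriptSb m d i))

/-- The matching relation: `MatchRel σ τ` iff `τ = μ(σ)` for `σ ∈ S = S_1 ∪ S_2`. -/
def MatchRel (m d : ℕ) (σ τ : Finset (Fin m ⊕ Fin m)) : Prop :=
  (∃ i : Fin m, σ ∈ Sa m d i ∧ τ = insert (Sum.inl i) σ) ∨
  (∃ i : Fin m, σ ∈ Sb m d i ∧ τ = insert (Sum.inr i) σ)

/-- `B_{s+1} = {b_{s+1}, b_{s+2}, …, b_{s+m-d}}` (0-based `s`, subscripts mod `m`). -/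
def Bset (m d : ℕ) (s : Fin m) : Finset (Fin m ⊕ Fin m) :=
  (Finset.univ.filter (fun j : Fin m => (j.val + m - s.val) % m < m - d)).image Sum.inr

/-- `b_{n+1} ∈ σ` (0-based subscript `n`). -/
def hasB (m : ℕ) (σ : Finset (Fin m ⊕ Fin m)) (n : ℕ) : Prop :=
  ∃ j : Fin m, j.val = n ∧ Sum.inr j ∈ σ

/-- `σ ⊆ B`. -/
def onlyB (m : ℕ) (σ : Finset (Fin m ⊕ Fin m)) : Prop :=
  ∀ v ∈ σ, ∃ j : Fin m, v = Sum.inr j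

/-- Property `P_l` of the paper, with parameter `j1` (0-based: the paper's `j_1 - 1`, so
`1 ≤ j1 ≤ d`).  With 0-based subscripts `i_r = (r-1)(d+1)`, `j_r = j1 + (r-1)(d+1)` and
`k = m + j1 - (d+1)`:  σ ∈ M, σ ⊆ B, the `2l` smallest subscripts of σ are exactly
`0 = i_1, j_1, i_2, j_2, …, i_l, j_l`, the largest subscript is `k`, and
`σ \ {b_{i_r}} ∉ M`, `σ \ {b_{j_r}} ∉ M` for all `1 ≤ r ≤ l`. -/
def propP (m d l j1 : ℕ) (σ : Finset (Fin m ⊕ Fin m)) : Prop :=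
  σ ∈ setM m d ∧ onlyB m σ ∧ 1 ≤ j1 ∧ j1 ≤ d ∧
  (∀ r, 1 ≤ r → r ≤ l → hasB m σ ((r-1)*(d+1)) ∧ hasB m σ (j1 + (r-1)*(d+1))) ∧
  (∀ j : Fin m, Sum.inr j ∈ σ → j.val ≤ j1 + (l-1)*(d+1) →
      ∃ r, 1 ≤ r ∧ r ≤ l ∧ (j.val = (r-1)*(d+1) ∨ j.val = j1 + (r-1)*(d+1))) ∧
  hasB m σ (m + j1 - (d+1)) ∧
  (∀ j : Fin m, Sum.inr j ∈ σ → j.val ≤ m + j1 - (d+1)) ∧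
  (∀ r, 1 ≤ r → r ≤ l → ∀ j : Fin m,
      (j.val = (r-1)*(d+1) ∨ j.val = j1 + (r-1)*(d+1)) → σ.erase (Sum.inr j) ∉ setM m d)

/-! All subscripts are 0-based. The first phase leaves the faces `σ ⊆ B` that dominate every `a_k`,
i.e. those whose subscripts meet every cyclic window of `d` consecutive residues modulo `m`. Hence
the largest subscript is `m + j - (d + 1)` for some `j ∈ {1, …, d}`, and this `j` turns out to
determine the critical cell.

In the second phase, the faces left when it is the turn of `b_i` are those that agree with the
pattern `{x | x ≡ 0 or x ≡ j mod d + 1}` before its first element that is at least `i`. Indeed, let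
`i` be a pattern element other than the largest subscript. Adding `b_i` to such a face gives another
such face, so an unmatched face contains `b_i` and no longer dominates after its removal. As pattern
elements two places apart differ by `d + 1`, this forces the next subscript after `i` to come no
earlier than the next pattern element. Conversely, removing `b_i` then leaves a window without
subscripts. Since `d + 1` divides `m`, the pattern closes up cyclically, and at the end only the
faces that agree with it everywhere are left. -/

section ElementMatching

variable {α : Type*} [DecidableEq α]

theorem mem_stepSurv_iff {x : α} {T : Set (Finset α)} {σ : Finset α} :
    σ ∈ stepSurv x T ↔ σ ∈ T ∧ (x ∉ σ → insert x σ ∉ T) ∧ (x ∈ σ → σ.erase x ∉ T) := by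
  have mem_image : σ ∈ insert x '' stepS x T ↔ x ∈ σ ∧ σ.erase x ∈ T ∧ σ ∈ T := by
    constructor
    · rintro ⟨τ, ⟨hτ, hx, hins⟩, rfl⟩
      exact ⟨mem_insert_self x τ, by rwa [erase_insert hx], hins⟩
    · rintro ⟨hx, her, hσ⟩
      exact ⟨σ.erase x, ⟨her, notMem_erase x σ, by rwa [insert_erase hx]⟩, insert_erase hx⟩
  rw [stepSurv, Set.mem_sdiff, Set.mem_union, mem_image]
  simp only [stepS, Set.mem_ofPred_eq]
  tauto

theorem phase_concat (T : Set (Finset α)) (l : List α) (x : α) :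
    phase T (l ++ [x]) = stepSurv x (phase T l) :=
  List.foldl_concat ..

theorem phase_eq_of_stepSurv_eq {l : List α} (Q : ℕ → Set (Finset α))
    (hQ : ∀ (i : ℕ) (hi : i < l.length), stepSurv l[i] (Q i) = Q (i + 1)) :
    phase (Q 0) l = Q l.length := by
  induction l using List.reverseRecOn with
  | nil => rfl
  | append_singleton l x ih =>
    have hl : phase (Q 0) l = Q l.length := ih fun i hi => by
      rw [← hQ i (hi.trans (by simp)), List.getElem_append_left hi]
    simpa [phase_concat, hl] using hQ l.length (by simp)

theorem mem_phase_iff_forall_notMem {T : Set (Finset α)} {l : List α} {σ : Finset α} :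
    σ ∈ phase T l ↔ σ ∈ T ∧ ∀ (i : ℕ) (hi : i < l.length),
      σ ∉ stepS l[i] (phase T (l.take i)) ∪ insert l[i] '' stepS l[i] (phase T (l.take i)) := by
  induction l generalizing T with
  | nil => simp [phase]
  | cons x l ih =>
    change σ ∈ phase (stepSurv x T) l ↔ _
    rw [ih, stepSurv, Set.mem_sdiff, and_assoc]
    refine and_congr_right fun _ => ⟨fun h i hi => ?_, fun h => ⟨h 0 (by simp), fun i hi => ?_⟩⟩
    · cases i with
      | zero => exact h.1
      | succ i => exact h.2 i (Nat.lt_of_succ_lt_succ hi)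
    · exact h (i + 1) (Nat.succ_lt_succ hi)

theorem mem_phase_isIndepSet_iff (G : SimpleGraph α) {l : List α}
    (hl : ∀ u ∈ l, ∀ v ∈ l, ¬ G.Adj u v) {σ : Finset α} :
    σ ∈ phase {τ | G.IsIndepSet τ} l ↔ G.IsIndepSet σ ∧ ∀ v ∈ l, ∃ w ∈ σ, G.Adj v w := by
  induction l using List.reverseRecOn generalizing σ with
  | nil => simp [phase]
  | append_singleton l x ih =>
    simp only [List.mem_append, List.mem_singleton] at hl
    have mem_phase {τ : Finset α} := @ih (fun u hu v hv => hl u (.inl hu) v (.inl hv)) τ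
    have not_adj {v : α} (hv : v ∈ l) : ¬ G.Adj v x := hl v (.inl hv) x (.inr rfl)
    simp only [phase_concat, mem_stepSurv_iff, mem_phase, List.forall_mem_append,
      List.forall_mem_singleton, ← and_assoc]
    constructor
    · rintro ⟨⟨⟨hσ, hdom⟩, hins⟩, her⟩
      refine ⟨⟨hσ, hdom⟩, ?_⟩
      by_contra! hx
      by_cases hxσ : x ∈ σ
      · refine her hxσ ⟨hσ.mono (by simp), fun v hv => ?_⟩
        obtain ⟨w, hw, hvw⟩ := hdom v hv
        exact ⟨w, mem_erase.2 ⟨fun h => not_adj hv (h ▸ hvw), hw⟩, hvw⟩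
      · refine hins hxσ ⟨?_, fun v hv => ?_⟩
        · rw [coe_insert]
          exact hσ.insert fun w hw _ => ⟨hx w hw, fun h => hx w hw h.symm⟩
        · obtain ⟨w, hw, hvw⟩ := hdom v hv
          exact ⟨w, mem_insert_of_mem hw, hvw⟩
    · rintro ⟨⟨hσ, hdom⟩, w, hw, hxw⟩
      refine ⟨⟨⟨hσ, hdom⟩, fun _ h => ?_⟩, fun hx => absurd hxw (hσ hx hw hxw.ne)⟩
      exact h.1 (by simp) (by simp [hw]) hxw.ne hxw

end ElementMatching

section CyclicWindows

/-- `s` meets each of the `m` cyclic windows `{k, k + 1, …, k + d - 1}` of residues modulo `m`.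
For `s ⊆ {0, …, m - 1}` this says that the vertices `b_x` with `x ∈ s` dominate every `a_k`.
The second alternative is the part of the window that wraps around past `m`. -/
def IsHitting (m d : ℕ) (s : Set ℕ) : Prop :=
  ∀ k < m, ∃ x ∈ s, (k ≤ x ∧ x < k + d) ∨ x + m < k + d

variable {m d : ℕ} {s s' : Set ℕ}

theorem add_sub_mod_lt_iff {k x : ℕ} (hd : d ≤ m) (hk : k < m) (hx : x < m) :
    (x + m - k) % m < d ↔ (k ≤ x ∧ x < k + d) ∨ x + m < k + d := by
  rcases le_or_gt k x with h | h
  · rw [show x + m - k = x - k + m by omega, Nat.add_mod_right, Nat.mod_eq_of_lt (by omega)]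
    omega
  · rw [Nat.mod_eq_of_lt (by omega)]
    omega

theorem IsHitting.mono (hs : IsHitting m d s) (h : s ⊆ s') : IsHitting m d s' := fun k hk =>
  let ⟨x, hx, hkx⟩ := hs k hk
  ⟨x, h hx, hkx⟩

theorem IsHitting.sdiff_singleton {p i x : ℕ} (hs : IsHitting m d s) (hp : p ∈ s) (hpi : p < i)
    (hx : x ∈ s) (hix : i < x) (hxp : x ≤ p + d) : IsHitting m d (s \ {i}) := by
  intro k hk
  obtain ⟨z, hz, hkz⟩ := hs k hk
  rcases ne_or_eq z i with hzi | rfl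
  · exact ⟨z, ⟨hz, hzi⟩, hkz⟩
  rcases le_or_gt k p with hkp | hpk
  · exact ⟨p, ⟨hp, hpi.ne⟩, by omega⟩
  · rcases hkz with hkz | hkz
    · exact ⟨x, ⟨hx, hix.ne'⟩, by omega⟩
    · exact ⟨p, ⟨hp, hpi.ne⟩, by omega⟩

theorem IsHitting.sdiff_singleton_zero {L x : ℕ} (hs : IsHitting m d s) (hL : L ∈ s)
    (hLm : L < m) (hdm : d ≤ m) (hx : x ∈ s) (hx0 : 0 < x) (hxL : x + m ≤ L + d) :
    IsHitting m d (s \ {0}) := by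
  intro k hk
  obtain ⟨z, hz, hkz⟩ := hs k hk
  rcases Nat.eq_zero_or_pos z with rfl | hz0
  · rcases Nat.lt_or_ge L k with hLk | hkL
    · exact ⟨x, ⟨hx, hx0.ne'⟩, by omega⟩
    · rcases hkz with hkz | hkz
      · exact ⟨x, ⟨hx, hx0.ne'⟩, by omega⟩
      · exact ⟨L, ⟨hL, (by omega : L ≠ 0)⟩, by omega⟩
  · exact ⟨z, ⟨hz, hz0.ne'⟩, hkz⟩

theorem IsHitting.exists_isGreatest (hs : IsHitting m d s) (hd : 0 < d) (hdm : d < m)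
    (hsm : s ⊆ Set.Iio m) : ∃ j, 1 ≤ j ∧ j ≤ d ∧ IsGreatest s (m + j - (d + 1)) := by
  obtain ⟨x, hx, hwin⟩ := hs (m - d) (by omega)
  have hbdd : BddAbove s := bddAbove_Iio.mono hsm
  have hle : x ≤ sSup s := le_csSup hbdd hx
  have hlt : sSup s < m := hsm (Nat.sSup_mem ⟨x, hx⟩ hbdd)
  refine ⟨sSup s + (d + 1) - m, by omega, by omega, ?_⟩
  rw [show m + (sSup s + (d + 1) - m) - (d + 1) = sSup s by omega]
  exact ⟨Nat.sSup_mem ⟨x, hx⟩ hbdd, fun _ => le_csSup hbdd⟩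

end CyclicWindows

section CriticalPattern

/-- The subscripts of the critical cell with parameter `j`, continued beyond `m`: the numbers
`r (d + 1)` and `j + r (d + 1)`, which are the paper's `i_{r+1} - 1` and `j_{r+1} - 1`. -/
def criticalPattern (d j : ℕ) : Set ℕ :=
  {x | x % (d + 1) = 0 ∨ x % (d + 1) = j}

variable {m d j : ℕ}

theorem zero_mem_criticalPattern : 0 ∈ criticalPattern d j := .inl (Nat.zero_mod _)

theorem self_mem_criticalPattern (hjd : j ≤ d) : j ∈ criticalPattern d j :=
  .inr (Nat.mod_eq_of_lt (Nat.lt_succ_of_le hjd))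

theorem mem_criticalPattern_of_dvd (hm : d + 1 ∣ m) : m ∈ criticalPattern d j :=
  .inl (Nat.mod_eq_zero_of_dvd hm)

theorem add_succ_mem_criticalPattern {x : ℕ} (hx : x ∈ criticalPattern d j) :
    x + (d + 1) ∈ criticalPattern d j := by
  simpa [criticalPattern] using hx

theorem eq_zero_or_eq_of_mem_criticalPattern {x : ℕ} (hx : x ∈ criticalPattern d j)
    (hxd : x ≤ d) : x = 0 ∨ x = j := by
  simpa [criticalPattern, Nat.mod_eq_of_lt (Nat.lt_succ_of_le hxd)] using hx

theorem add_mem_criticalPattern_of_dvd {q : ℕ} (hq : d + 1 ∣ q) (hjd : j ≤ d) :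
    q + j ∈ criticalPattern d j := by
  obtain ⟨r, rfl⟩ := hq
  exact .inr (by rw [Nat.mul_add_mod, Nat.mod_eq_of_lt (Nat.lt_succ_of_le hjd)])

theorem last_mem_criticalPattern (hm : d + 1 ∣ m) (hdm : d < m) (hjd : j ≤ d) :
    m + j - (d + 1) ∈ criticalPattern d j := by
  rw [Nat.sub_add_comm hdm]
  exact add_mem_criticalPattern_of_dvd (Nat.dvd_sub hm dvd_rfl) hjd

theorem le_last_of_mem_criticalPattern {x : ℕ} (hm : d + 1 ∣ m) (hx : x ∈ criticalPattern d j)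
    (hxm : x < m) : x ≤ m + j - (d + 1) := by
  have hmod := Nat.mod_le x (d + 1)
  have hle : d + 1 ≤ m - (x - x % (d + 1)) :=
    Nat.le_of_dvd (by omega) (Nat.dvd_sub hm (Nat.dvd_sub_mod x))
  rcases hx with hx | hx <;> omega

theorem eq_of_mem_criticalPattern_of_window {p x y : ℕ} (hp : p ∈ criticalPattern d j)
    (hx : x ∈ criticalPattern d j) (hpx : p < x) (hxp : x < p + (d + 1))
    (hy : y ∈ criticalPattern d j) (hpy : p < y) (hyp : y < p + (d + 1)) : x = y := by
  have mod_eq {z : ℕ} (hpz : p < z) (hzp : z < p + (d + 1)) : z % (d + 1) =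
      if d + 1 ≤ p % (d + 1) + (z - p) then p % (d + 1) + (z - p) - (d + 1)
      else p % (d + 1) + (z - p) := by
    conv_lhs => rw [← Nat.add_sub_cancel' hpz.le, Nat.add_mod_eq_ite,
      Nat.mod_eq_of_lt (show z - p < d + 1 by omega)]
  have := mod_eq hpx hxp
  have := mod_eq hpy hyp
  have := Nat.mod_lt p (Nat.succ_pos d)
  simp only [criticalPattern, Set.mem_ofPred_eq] at hp hx hy
  split_ifs at * <;> omega

theorem exists_criticalPattern_window {x : ℕ} (hj : 1 ≤ j) (hjd : j ≤ d)
    (hx : x ∈ criticalPattern d j) (hx0 : 0 < x) :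
    ∃ p ∈ criticalPattern d j, p < x ∧ x < p + (d + 1) := by
  rcases hx with hx | hx
  · have hdvd : d + 1 ∣ x := Nat.dvd_of_mod_eq_zero hx
    have hle : d + 1 ≤ x := Nat.le_of_dvd hx0 hdvd
    exact ⟨x + j - (d + 1), last_mem_criticalPattern hdvd hle hjd, by omega, by omega⟩
  · have hmod := Nat.mod_le x (d + 1)
    exact ⟨x - x % (d + 1), mem_criticalPattern_of_dvd (Nat.dvd_sub_mod x), by omega, by omega⟩

theorem isHitting_criticalPattern_inter_Iio (hj : 1 ≤ j) (hjd : j ≤ d) :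
    IsHitting m d (criticalPattern d j ∩ Set.Iio m) := by
  intro k hk
  obtain ⟨x, hx, hkx, hxk⟩ : ∃ x ∈ criticalPattern d j, k ≤ x ∧ x < k + d := by
    have hq : d + 1 ∣ k - k % (d + 1) := Nat.dvd_sub_mod k
    have := Nat.mod_le k (d + 1)
    have : k % (d + 1) < d + 1 := Nat.mod_lt k d.succ_pos
    rcases Nat.eq_zero_or_pos (k % (d + 1)) with hk0 | hk0
    · exact ⟨k, .inl hk0, le_rfl, by omega⟩
    rcases le_or_gt (k % (d + 1)) j with hkj | hjk
    · exact ⟨k - k % (d + 1) + j, add_mem_criticalPattern_of_dvd hq hjd, by omega, by omega⟩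
    · exact ⟨k - k % (d + 1) + (d + 1), add_succ_mem_criticalPattern
        (mem_criticalPattern_of_dvd hq), by omega, by omega⟩
  rcases lt_or_ge x m with hxm | hmx
  · exact ⟨x, ⟨hx, hxm⟩, .inl ⟨hkx, hxk⟩⟩
  · exact ⟨0, ⟨zero_mem_criticalPattern, Nat.zero_lt_of_lt hk⟩, .inr (by omega)⟩

theorem mem_criticalPattern_iff_exists_lt {t x : ℕ} (hjd : j ≤ d) (hx : x < t * (d + 1)) :
    x ∈ criticalPattern d j ↔ ∃ r < t, x = r * (d + 1) ∨ x = j + r * (d + 1) := by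
  constructor
  · have hdiv := Nat.mod_add_div' x (d + 1)
    intro hxp
    refine ⟨x / (d + 1), Nat.div_lt_of_lt_mul (Nat.mul_comm t _ ▸ hx), ?_⟩
    exact hxp.imp (fun h => by omega) fun h => by omega
  · rintro ⟨r, -, rfl | rfl⟩
    · exact mem_criticalPattern_of_dvd (Nat.dvd_mul_left _ r)
    · rw [Nat.add_comm]
      exact add_mem_criticalPattern_of_dvd (Nat.dvd_mul_left _ r) hjd

end CriticalPattern

section PatternPrefix

/-- The greatest element of `s` is the last element `m + j - (d + 1)` of the critical pattern with
parameter `j`, and `s` agrees with this pattern before the first element of the pattern that is at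
least `i`. This is what the first `i` steps of the second phase enforce. -/
structure IsPatternPrefix (m d j i : ℕ) (s : Set ℕ) : Prop where
  isGreatest : IsGreatest s (m + j - (d + 1))
  mem_iff {x : ℕ} (hx : ∀ y ∈ criticalPattern d j, i ≤ y → x < y) : x ∈ s ↔ x ∈ criticalPattern d j

variable {m d j i : ℕ} {s : Set ℕ}

namespace IsPatternPrefix

theorem mem_iff_of_lt (h : IsPatternPrefix m d j i s) {x : ℕ} (hx : x < i) :
    x ∈ s ↔ x ∈ criticalPattern d j :=
  h.mem_iff fun _ _ hiy => hx.trans_le hiy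

theorem of_succ (h : IsPatternPrefix m d j (i + 1) s) : IsPatternPrefix m d j i s where
  isGreatest := h.isGreatest
  mem_iff hx := h.mem_iff fun y hy hiy => hx y hy (Nat.le_of_succ_le hiy)

theorem succ_of_notMem (h : IsPatternPrefix m d j i s) (hi : i ∉ criticalPattern d j) :
    IsPatternPrefix m d j (i + 1) s where
  isGreatest := h.isGreatest
  mem_iff hx := h.mem_iff fun y hy hiy =>
    hx y hy (Nat.succ_le_of_lt (hiy.lt_of_ne fun hyi => hi (hyi ▸ hy)))

theorem succ_of_forall_exists (h : IsPatternPrefix m d j i s) (hi : i ∈ criticalPattern d j)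
    (his : i ∈ s) (hgap : ∀ x ∈ s, i < x → ∃ y ∈ criticalPattern d j, i < y ∧ y ≤ x) :
    IsPatternPrefix m d j (i + 1) s where
  isGreatest := h.isGreatest
  mem_iff {x} hx := by
    rcases lt_trichotomy x i with hxi | rfl | hix
    · exact h.mem_iff_of_lt hxi
    · exact iff_of_true his hi
    · refine iff_of_false (fun hxs => ?_) fun hxp => (hx x hxp hix).false
      obtain ⟨y, hy, hiy, hyx⟩ := hgap x hxs hix
      exact (hx y hy hiy).not_ge hyx

theorem congr_of_forall_lt {s' : Set ℕ} (h : IsPatternPrefix m d j i s)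
    (hi : i ∈ criticalPattern d j) (hs' : IsGreatest s' (m + j - (d + 1)))
    (hlt : ∀ x < i, x ∈ s' ↔ x ∈ s) : IsPatternPrefix m d j i s' where
  isGreatest := hs'
  mem_iff hx := (hlt _ (hx i hi le_rfl)).trans (h.mem_iff hx)

theorem insert_self (h : IsPatternPrefix m d j i s) (hi : i ∈ criticalPattern d j)
    (him : i ≤ m + j - (d + 1)) : IsPatternPrefix m d j i (insert i s) :=
  h.congr_of_forall_lt hi ⟨.inr h.isGreatest.1, by
    simpa [upperBounds_insert] using ⟨him, h.isGreatest.2⟩⟩ fun x hx => by simp [hx.ne]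

theorem sdiff_self (h : IsPatternPrefix m d j i s) (hi : i ∈ criticalPattern d j)
    (him : i ≠ m + j - (d + 1)) : IsPatternPrefix m d j i (s \ {i}) :=
  h.congr_of_forall_lt hi ⟨⟨h.isGreatest.1, him.symm⟩, fun _ hx => h.isGreatest.2 hx.1⟩
    fun x hx => by simp [hx.ne]

theorem succ_of_not_isHitting (h : IsPatternPrefix m d j i s) (hs : IsHitting m d s)
    (hj : 1 ≤ j) (hjd : j ≤ d) (hdm : d < m) (hi : i ∈ criticalPattern d j) (his : i ∈ s)
    (hnot : ¬ IsHitting m d (s \ {i})) : IsPatternPrefix m d j (i + 1) s := by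
  refine h.succ_of_forall_exists hi his fun x hxs hix => ?_
  by_contra! hgap
  rcases Nat.eq_zero_or_pos i with rfl | hi0
  · have hxj : x < j := hgap j (self_mem_criticalPattern hjd) hj
    exact hnot (hs.sdiff_singleton_zero h.isGreatest.1 (by omega) hdm.le hxs hix (by omega))
  · obtain ⟨p, hp, hpi, hip⟩ := exists_criticalPattern_window hj hjd hi hi0
    have hps : p ∈ s := (h.mem_iff_of_lt hpi).2 hp
    have hxp : x < p + (d + 1) := hgap _ (add_succ_mem_criticalPattern hp) hip
    exact hnot (hs.sdiff_singleton hps hpi hxs hix (Nat.le_of_lt_succ hxp))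

theorem eq_of_mem_window {p x : ℕ} (h : IsPatternPrefix m d j (i + 1) s)
    (hi : i ∈ criticalPattern d j) (hp : p ∈ criticalPattern d j) (hpi : p < i)
    (hip : i < p + (d + 1)) (hxs : x ∈ s) (hpx : p < x) (hxp : x < p + (d + 1)) : x = i := by
  have eq_of_mem {y : ℕ} (hy : y ∈ criticalPattern d j) (hpy : p < y) (hyp : y < p + (d + 1)) :
      y = i := eq_of_mem_criticalPattern_of_window hp hy hpy hyp hi hpi hip
  refine eq_of_mem ((h.mem_iff fun y hy hiy => ?_).1 hxs) hpx hxp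
  by_contra! hyx
  exact (Nat.ne_of_lt hiy) (eq_of_mem hy (hpi.trans hiy) (hyx.trans_lt hxp)).symm

theorem not_isHitting_sdiff_zero (h : IsPatternPrefix m d j 1 s) (hj : 1 ≤ j) (hjd : j ≤ d)
    (hdm : d < m) : ¬ IsHitting m d (s \ {0}) := by
  intro hs
  have le_of_mem {x : ℕ} (hxs : x ∈ s) (hx0 : x ≠ 0) : j ≤ x := by
    by_contra! hxj
    have hxp : x ∈ criticalPattern d j := (h.mem_iff fun y hy hy1 => by
      by_contra! hyx
      have := eq_zero_or_eq_of_mem_criticalPattern hy (by omega)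
      omega).1 hxs
    have := eq_zero_or_eq_of_mem_criticalPattern hxp (by omega)
    omega
  obtain ⟨k, hk, hwin⟩ : ∃ k < m, ∀ x, (k ≤ x ∧ x < k + d) ∨ x + m < k + d →
      x < j ∨ m + j - (d + 1) < x := by
    rcases hjd.lt_or_eq with hjd | rfl
    · exact ⟨m + j - d, by omega, by omega⟩
    · exact ⟨0, by omega, by omega⟩
  obtain ⟨x, ⟨hxs, hx0⟩, hx⟩ := hs k hk
  have := le_of_mem hxs hx0
  have := h.isGreatest.2 hxs
  have := hwin x hx
  omega

theorem not_isHitting_sdiff (h : IsPatternPrefix m d j (i + 1) s) (hj : 1 ≤ j) (hjd : j ≤ d)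
    (hm : d + 1 ∣ m) (him : i < m) (his : i ∈ s) : ¬ IsHitting m d (s \ {i}) := by
  have hdm : d < m := Nat.le_of_dvd (by omega) hm
  rcases Nat.eq_zero_or_pos i with rfl | hi0
  · exact h.not_isHitting_sdiff_zero hj hjd hdm
  have hi : i ∈ criticalPattern d j := (h.mem_iff_of_lt i.lt_succ_self).1 his
  obtain ⟨p, hp, hpi, hip⟩ := exists_criticalPattern_window hj hjd hi hi0
  have hpm : p + (d + 1) ≤ m := by
    by_contra! hmp
    exact him.ne (eq_of_mem_criticalPattern_of_window hp hi hpi hip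
      (mem_criticalPattern_of_dvd hm) (hpi.trans him) hmp)
  intro hs
  obtain ⟨x, ⟨hxs, hxi⟩, hx⟩ := hs (p + 1) (by omega)
  exact hxi (h.eq_of_mem_window hi hp hpi hip hxs (by omega) (by omega))

theorem not_insert {j' : ℕ} (h : IsPatternPrefix m d j (i + 1) s) (hj : 1 ≤ j) (hjd : j ≤ d)
    (hdm : d < m) (his : i ∉ s) : ¬ IsPatternPrefix m d j' i (insert i s) := by
  intro h'
  have hi : i ∉ criticalPattern d j := mt (h.mem_iff_of_lt i.lt_succ_self).2 his
  have hne : i ≠ m + j - (d + 1) := fun hi => his (hi ▸ h.isGreatest.1)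
  rcases hne.lt_or_gt with hlt | hgt
  · have hgreatest : IsGreatest (insert i s) (m + j - (d + 1)) := by
      simpa [hlt.le] using h.isGreatest.insert i
    have hjj' : j' = j := by
      have := h'.isGreatest.unique hgreatest
      omega
    subst hjj'
    exact hi ((h'.mem_iff fun y hy hiy => hiy.lt_of_ne fun hyi => hi (hyi ▸ hy)).1 (.inl rfl))
  · have hjs : j ∈ s := (h.mem_iff_of_lt (by omega)).2 (self_mem_criticalPattern hjd)
    have hij' : i ≤ m + j' - (d + 1) := h'.isGreatest.2 (.inl rfl)
    have hjp : j ∈ criticalPattern d j' := (h'.mem_iff_of_lt (by omega)).1 (.inr hjs)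
    have := eq_zero_or_eq_of_mem_criticalPattern hjp hjd
    omega

end IsPatternPrefix

theorem isPatternPrefix_zero_iff :
    IsPatternPrefix m d j 0 s ↔ IsGreatest s (m + j - (d + 1)) :=
  ⟨fun h => h.isGreatest, fun h => ⟨h, fun hx =>
    absurd (hx 0 zero_mem_criticalPattern le_rfl) (Nat.not_lt_zero _)⟩⟩

theorem isPatternPrefix_self_iff (hm : d + 1 ∣ m) (hdm : d < m) (hjd : j ≤ d) :
    IsPatternPrefix m d j m s ↔ s = criticalPattern d j ∩ Set.Iio m := by
  constructor
  · intro h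
    ext x
    rcases lt_or_ge x m with hxm | hmx
    · simpa [hxm] using h.mem_iff_of_lt hxm
    · refine iff_of_false (fun hxs => ?_) fun hx => hmx.not_gt hx.2
      have := h.isGreatest.2 hxs
      omega
  · rintro rfl
    refine ⟨⟨⟨last_mem_criticalPattern hm hdm hjd, (by omega : m + j - (d + 1) < m)⟩,
      fun x hx => le_last_of_mem_criticalPattern hm hx.1 hx.2⟩, fun {x} hx => ?_⟩
    simp [hx m (mem_criticalPattern_of_dvd hm) le_rfl]

/-- The sets of subscripts of the faces that survive the first `i` steps of the second phase, that
is, the steps of the vertices `b_x` with (0-based) `x < i`. -/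
def survivingSubscripts (m d i : ℕ) : Set (Set ℕ) :=
  {s | IsHitting m d s ∧ ∃ j, 1 ≤ j ∧ j ≤ d ∧ IsPatternPrefix m d j i s}

theorem mem_survivingSubscripts_zero_iff (hd : 1 ≤ d) (hdm : d < m) (hsm : s ⊆ Set.Iio m) :
    s ∈ survivingSubscripts m d 0 ↔ IsHitting m d s := by
  simp only [survivingSubscripts, isPatternPrefix_zero_iff]
  exact and_iff_left_of_imp fun hs => hs.exists_isGreatest hd hdm hsm

theorem mem_survivingSubscripts_succ_of_mem (hm : d + 1 ∣ m) (him : i < m)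
    (hs : s ∈ survivingSubscripts m d i) (hins : i ∉ s → insert i s ∉ survivingSubscripts m d i)
    (hsdiff : i ∈ s → s \ {i} ∉ survivingSubscripts m d i) :
    s ∈ survivingSubscripts m d (i + 1) := by
  obtain ⟨hhit, j, hj, hjd, h⟩ := hs
  refine ⟨hhit, j, hj, hjd, ?_⟩
  by_cases hi : i ∈ criticalPattern d j
  swap
  · exact h.succ_of_notMem hi
  have hle : i ≤ m + j - (d + 1) := le_last_of_mem_criticalPattern hm hi him
  have his : i ∈ s := by
    by_contra his
    exact hins his ⟨hhit.mono (Set.subset_insert i s), j, hj, hjd, h.insert_self hi hle⟩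
  rcases eq_or_ne i (m + j - (d + 1)) with heq | hne
  · refine h.succ_of_forall_exists hi his fun x hxs hix => ?_
    exact absurd (h.isGreatest.2 hxs) (heq ▸ hix.not_ge)
  · exact h.succ_of_not_isHitting hhit hj hjd (Nat.le_of_dvd (by omega) hm) hi his
      fun hhit' => hsdiff his ⟨hhit', j, hj, hjd, h.sdiff_self hi hne⟩

theorem mem_survivingSubscripts_succ_iff (hm : d + 1 ∣ m) (him : i < m) :
    s ∈ survivingSubscripts m d (i + 1) ↔ s ∈ survivingSubscripts m d i ∧
      (i ∉ s → insert i s ∉ survivingSubscripts m d i) ∧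
      (i ∈ s → s \ {i} ∉ survivingSubscripts m d i) := by
  refine ⟨?_, fun ⟨hs, hins, hsdiff⟩ => mem_survivingSubscripts_succ_of_mem hm him hs hins hsdiff⟩
  rintro ⟨hhit, j, hj, hjd, h⟩
  refine ⟨⟨hhit, j, hj, hjd, h.of_succ⟩, fun his ⟨_, _, _, _, h'⟩ => ?_, fun his ⟨hhit', _⟩ => ?_⟩
  · exact h.not_insert hj hjd (Nat.le_of_dvd (by omega) hm) his h'
  · exact h.not_isHitting_sdiff hj hjd hm him his hhit'

theorem mem_survivingSubscripts_self_iff (hm : d + 1 ∣ m) (hdm : d < m) :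
    s ∈ survivingSubscripts m d m ↔ ∃ j, 1 ≤ j ∧ j ≤ d ∧ s = criticalPattern d j ∩ Set.Iio m := by
  constructor
  · rintro ⟨_, j, hj, hjd, h⟩
    exact ⟨j, hj, hjd, (isPatternPrefix_self_iff hm hdm hjd).1 h⟩
  · rintro ⟨j, hj, hjd, rfl⟩
    exact ⟨isHitting_criticalPattern_inter_Iio hj hjd, j, hj, hjd,
      (isPatternPrefix_self_iff hm hdm hjd).2 rfl⟩

end PatternPrefix

namespace Gmd

variable {m d : ℕ} {σ : Finset (Fin m ⊕ Fin m)}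

theorem adj_inl_inr_iff {i x : Fin m} :
    (Gmd m d).Adj (Sum.inl i) (Sum.inr x) ↔ (x.val + m - i.val) % m < d := by
  simp [Gmd]

theorem not_adj_inl_inl {i k : Fin m} : ¬ (Gmd m d).Adj (Sum.inl i) (Sum.inl k) := by
  simp [Gmd]

theorem not_adj_inr_inr {x y : Fin m} : ¬ (Gmd m d).Adj (Sum.inr x) (Sum.inr y) := by
  simp [Gmd]

theorem faceP_eq_setOf_isIndepSet : faceP m d = {σ : Finset _ | (Gmd m d).IsIndepSet σ} := by
  ext σ
  refine ⟨fun hσ u hu v hv _ => hσ u hu v hv, fun hσ u hu v hv huv => hσ hu hv huv.ne huv⟩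

/-- The set of 0-based subscripts of the vertices of `B` that lie in `σ`. -/
def subscripts (σ : Finset (Fin m ⊕ Fin m)) : Set ℕ :=
  {x | hasB m σ x}

theorem val_mem_subscripts_iff {x : Fin m} : x.val ∈ subscripts σ ↔ Sum.inr x ∈ σ := by
  simp [subscripts, hasB, Fin.val_inj]

theorem subscripts_subset_Iio : subscripts σ ⊆ Set.Iio m := by
  rintro _ ⟨x, rfl, -⟩
  exact x.isLt

theorem subscripts_eq_inter_Iio_iff {p : Set ℕ} :
    subscripts σ = p ∩ Set.Iio m ↔ ∀ x : Fin m, Sum.inr x ∈ σ ↔ x.val ∈ p := by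
  simp only [← val_mem_subscripts_iff]
  constructor
  · intro h x
    simp [h]
  · intro h
    ext x
    constructor
    · intro hx
      have hxm := subscripts_subset_Iio hx
      exact ⟨(h ⟨x, hxm⟩).1 hx, hxm⟩
    · rintro ⟨hx, hxm⟩
      exact (h ⟨x, hxm⟩).2 hx

theorem subscripts_insert (x : Fin m) :
    subscripts (insert (Sum.inr x) σ) = insert x.val (subscripts σ) := by
  ext y
  simp [subscripts, hasB, eq_comm (a := y), and_or_left, exists_or]

theorem subscripts_erase (x : Fin m) :
    subscripts (σ.erase (Sum.inr x)) = subscripts σ \ {x.val} := by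
  ext y
  simp only [subscripts, hasB, mem_erase, Set.mem_sdiff, Set.mem_ofPred_eq,
    Set.mem_singleton_iff, ne_eq, Sum.inr.injEq]
  constructor
  · rintro ⟨z, rfl, hzx, hz⟩
    exact ⟨⟨z, rfl, hz⟩, fun h => hzx (Fin.ext h)⟩
  · rintro ⟨⟨z, rfl, hz⟩, hzx⟩
    exact ⟨z, rfl, fun h => hzx (congrArg _ h), hz⟩

theorem onlyB_insert_iff {x : Fin m} : onlyB m (insert (Sum.inr x) σ) ↔ onlyB m σ := by
  simp [onlyB]

theorem onlyB_erase_iff {x : Fin m} : onlyB m (σ.erase (Sum.inr x)) ↔ onlyB m σ := by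
  simp [onlyB]

theorem mem_setM_iff (hdm : d ≤ m) :
    σ ∈ setM m d ↔ onlyB m σ ∧ IsHitting m d (subscripts σ) := by
  have adj_iff {k x : Fin m} : (Gmd m d).Adj (Sum.inl k) (Sum.inr x) ↔
      (k.val ≤ x ∧ x.val < k + d) ∨ x + m < k + d :=
    adj_inl_inr_iff.trans (add_sub_mod_lt_iff hdm k.isLt x.isLt)
  have hlistA : ∀ u ∈ listA m, ∀ v ∈ listA m, ¬ (Gmd m d).Adj u v := by
    simp [listA, not_adj_inl_inl]
  have dominating_iff : (∀ v ∈ listA m, ∃ w ∈ σ, (Gmd m d).Adj v w) ↔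
      IsHitting m d (subscripts σ) := by
    simp only [listA, List.forall_mem_map, List.mem_finRange, true_imp_iff]
    constructor
    · intro h k hk
      obtain ⟨k' | x, hx, hkx⟩ := h ⟨k, hk⟩
      · exact absurd hkx not_adj_inl_inl
      · exact ⟨x, ⟨x, rfl, hx⟩, adj_iff.1 hkx⟩
    · intro h k
      obtain ⟨_, ⟨x, rfl, hx⟩, hkx⟩ := h k k.isLt
      exact ⟨Sum.inr x, hx, adj_iff.2 hkx⟩
  rw [setM, faceP_eq_setOf_isIndepSet, mem_phase_isIndepSet_iff _ hlistA, dominating_iff]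
  refine and_congr_left fun hσ => ⟨?_, fun hB => ?_⟩
  · rintro hind (k | x) hv
    · obtain ⟨_, ⟨x, rfl, hx⟩, hkx⟩ := hσ k k.isLt
      exact absurd (adj_iff.2 hkx) (hind hv hx Sum.inl_ne_inr)
    · exact ⟨x, rfl⟩
  · intro u hu v hv _
    obtain ⟨x, rfl⟩ := hB u hu
    obtain ⟨y, rfl⟩ := hB v hv
    exact not_adj_inr_inr

theorem setC_eq_phase : setC m d = phase (setM m d) (listB m) := by
  ext σ
  rw [mem_phase_iff_forall_notMem, setM, mem_phase_iff_forall_notMem, and_assoc]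
  simp [setC, scriptSa, scriptSb, Sa, Sb, setM, listA, listB, Fin.forall_iff]

theorem phase_setM_listB_eq (hd : 1 ≤ d) (hm : d + 1 ∣ m) (hm0 : 0 < m) :
    phase (setM m d) (listB m) = {σ | onlyB m σ ∧ subscripts σ ∈ survivingSubscripts m d m} := by
  have hdm : d < m := Nat.le_of_dvd hm0 hm
  let Q (i : ℕ) : Set (Finset (Fin m ⊕ Fin m)) :=
    {σ | onlyB m σ ∧ subscripts σ ∈ survivingSubscripts m d i}
  have hQ0 : setM m d = Q 0 := by
    ext σ
    exact (mem_setM_iff hdm.le).trans (and_congr_right fun _ =>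
      (mem_survivingSubscripts_zero_iff hd hdm subscripts_subset_Iio).symm)
  have hQ (i : ℕ) (hi : i < (listB m).length) : stepSurv (listB m)[i] (Q i) = Q (i + 1) := by
    have him : i < m := by simpa [listB] using hi
    ext σ
    simp only [mem_stepSurv_iff, Q, listB, List.getElem_map, List.getElem_finRange, Fin.cast_mk,
      Set.mem_ofPred_eq, mem_survivingSubscripts_succ_iff hm him, onlyB_insert_iff,
      onlyB_erase_iff, subscripts_insert, subscripts_erase, ← val_mem_subscripts_iff]
    tauto
  simpa [hQ0, listB] using phase_eq_of_stepSurv_eq Q hQ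

/-- The critical cell with parameter `j`, which is the paper's `j_1 - 1`. -/
def criticalCell (m d j : ℕ) : Finset (Fin m ⊕ Fin m) :=
  ({x | x.val % (d + 1) = 0 ∨ x.val % (d + 1) = j} : Finset (Fin m)).map .inr

theorem inr_mem_criticalCell_iff {j : ℕ} {x : Fin m} :
    Sum.inr x ∈ criticalCell m d j ↔ x.val ∈ criticalPattern d j := by
  simp [criticalCell, criticalPattern]

theorem onlyB_criticalCell {j : ℕ} : onlyB m (criticalCell m d j) := by
  simp [criticalCell, onlyB]

theorem eq_criticalCell_iff {j : ℕ} : σ = criticalCell m d j ↔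
    onlyB m σ ∧ ∀ x : Fin m, Sum.inr x ∈ σ ↔ x.val ∈ criticalPattern d j := by
  constructor
  · rintro rfl
    exact ⟨onlyB_criticalCell, fun _ => inr_mem_criticalCell_iff⟩
  · rintro ⟨hB, hσ⟩
    ext (k | x)
    · exact iff_of_false (fun hk => by simpa using hB _ hk)
        fun hk => by simpa using onlyB_criticalCell _ hk
    · rw [hσ, inr_mem_criticalCell_iff]

theorem mem_setC_iff (hd : 1 ≤ d) (hm : d + 1 ∣ m) (hm0 : 0 < m) :
    σ ∈ setC m d ↔ ∃ j, 1 ≤ j ∧ j ≤ d ∧ σ = criticalCell m d j := by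
  have hdm : d < m := Nat.le_of_dvd hm0 hm
  simp only [setC_eq_phase, phase_setM_listB_eq hd hm hm0, Set.mem_ofPred_eq,
    mem_survivingSubscripts_self_iff hm hdm, subscripts_eq_inter_Iio_iff, eq_criticalCell_iff,
    ← exists_and_left, and_left_comm (a := onlyB m σ)]

theorem card_filter_mod_eq {t j : ℕ} (hj : j ≤ d) :
    #{x : Fin (t * (d + 1)) | x.val % (d + 1) = j} = t := by
  have hmod (x : ℕ) : x % (d + 1) = j ↔ x ≡ j [MOD d + 1] := by
    rw [Nat.ModEq, Nat.mod_eq_of_lt (Nat.lt_succ_of_le hj)]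
  rw [card_filter, Fin.sum_univ_eq_sum_range fun x => if x % (d + 1) = j then 1 else 0,
    ← card_filter, ← Nat.count_eq_card_filter_range]
  simp [hmod, Nat.count_modEq_card]

theorem card_criticalCell {t j : ℕ} (hj : 1 ≤ j) (hjd : j ≤ d) :
    #(criticalCell (t * (d + 1)) d j) = 2 * t := by
  rw [criticalCell, card_map, filter_or, card_union_of_disjoint, card_filter_mod_eq d.zero_le,
    card_filter_mod_eq hjd, two_mul]
  exact disjoint_filter.2 fun x _ h0 hj' => by omega

theorem criticalCell_injOn (hdm : d < m) : Set.InjOn (criticalCell m d) (Set.Icc 1 d) := by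
  rintro j ⟨hj, hjd⟩ j' - heq
  have hmem : Sum.inr ⟨j, hjd.trans_lt hdm⟩ ∈ criticalCell m d j' :=
    heq ▸ inr_mem_criticalCell_iff.2 (self_mem_criticalPattern hjd)
  exact (eq_zero_or_eq_of_mem_criticalPattern (inr_mem_criticalCell_iff.1 hmem) hjd).resolve_left
    (Nat.ne_of_gt hj)

end Gmd

/-- 0-based indices: suppose `m = t(d+1)` with `t ≥ 1`.  Then the critical
cells are exactly the `d` sets `{b_0, b_{j1}, b_{d+1}, b_{j1+(d+1)}, …, b_{(t-1)(d+1)},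
b_{j1+(t-1)(d+1)}}` for `j1 ∈ {1, …, d}`; in particular there are exactly `d` critical
cells, each of cardinality `2t`. -/
theorem stmt14 (m d t : ℕ) (hd : 1 ≤ d) (hdm : d ≤ m)
    (ht : 1 ≤ t) (hm : m = t * (d + 1)) :
    (∀ σ : Finset (Fin m ⊕ Fin m), σ ∈ setC m d ↔
      ∃ j1, 1 ≤ j1 ∧ j1 ≤ d ∧ onlyB m σ ∧
        (∀ j : Fin m, Sum.inr j ∈ σ ↔
          ∃ r, r < t ∧ (j.val = r * (d + 1) ∨ j.val = j1 + r * (d + 1)))) ∧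
    (setC m d).ncard = d ∧
    (∀ σ ∈ setC m d, σ.card = 2 * t) := by
  subst hm
  have hdvd : d + 1 ∣ t * (d + 1) := Nat.dvd_mul_left _ t
  have hpos : 0 < t * (d + 1) := Nat.mul_pos ht d.succ_pos
  have mem_iff {σ : Finset _} := Gmd.mem_setC_iff (σ := σ) hd hdvd hpos
  have setC_eq : setC (t * (d + 1)) d = Gmd.criticalCell (t * (d + 1)) d '' Set.Icc 1 d := by
    ext σ
    simp only [mem_iff, Set.mem_image, Set.mem_Icc, and_assoc, eq_comm]
  refine ⟨fun σ => ?_, ?_, fun σ hσ => ?_⟩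
  · rw [mem_iff]
    refine exists_congr fun j => and_congr_right fun _ => and_congr_right fun hjd => ?_
    simp only [Gmd.eq_criticalCell_iff, mem_criticalPattern_iff_exists_lt hjd (Fin.isLt _)]
  · rw [setC_eq, (Gmd.criticalCell_injOn (Nat.le_of_dvd hpos hdvd)).ncard_image]
    simp
  · obtain ⟨j, hj, hjd, rfl⟩ := mem_iff.1 hσ
    exact Gmd.card_criticalCell hj hjd
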